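/- Let I ⊆ R = K[[x_1,…,x_n]] be an ideal such that A = R/I has finite length. Then for every i ≥ 0 the Hilbert function of A satisfies HF_{R/I}(i) = dim_K ((I^⊥ ∩ P_{≤i} + P_{≤i−1}) / P_{≤i−1}), where P_{≤j} denotes the space of polynomials of degree at most j. -/

import Mathlib

/-- The contraction (derivative) action of the power series ring
`R = K[[x_1,…,x_n]]` on the polynomial ring `P = K[y_1,…,y_n]`:
`f ∘ g = f(∂/∂y_1, …, ∂/∂y_n)(g)`.  It is defined on the monomial basis by
`x^α ∘ y^β = (∏ i, (β i)!/(β i - α i)!) y^(β-α)` (zero unless `α ≤ β`), the honest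
iterated partial derivative, and extended `K`-linearly. -/
noncomputable def contract {K : Type*} [Field K] {n : ℕ} (f : MvPowerSeries (Fin n) K) :
    MvPolynomial (Fin n) K →ₗ[K] MvPolynomial (Fin n) K :=
  (MvPolynomial.basisMonomials (Fin n) K).constr K fun β =>
    ∑ α ∈ Finset.Iic β,
      (MvPowerSeries.coeff α f * ∏ i, ((β i).descFactorial (α i) : K)) •
        MvPolynomial.monomial (β - α) (1 : K)

theorem contract_add {K : Type*} [Field K] {n : ℕ} (f g : MvPowerSeries (Fin n) K) :
    contract (f + g) = contract f + contract g := by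
  unfold contract
  rw [← map_add]
  congr 1
  funext β
  simp only [Pi.add_apply]
  rw [← Finset.sum_add_distrib]
  exact Finset.sum_congr rfl fun α _ => by rw [map_add, add_mul, add_smul]

theorem contract_zero {K : Type*} [Field K] {n : ℕ} :
    contract (0 : MvPowerSeries (Fin n) K) = 0 := by
  unfold contract
  convert map_zero ((MvPolynomial.basisMonomials (Fin n) K).constr
    (M' := MvPolynomial (Fin n) K) K) using 2
  funext β
  simp

/-- Macaulay's inverse system `I^⊥ = {g ∈ P : f ∘ g = 0 for all f ∈ I}`,
a `K`-subspace of `P = K[y_1,…,y_n]`. -/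
noncomputable def perpSpace {K : Type*} [Field K] {n : ℕ}
    (I : Ideal (MvPowerSeries (Fin n) K)) : Submodule K (MvPolynomial (Fin n) K) where
  carrier := {g | ∀ f ∈ I, contract f g = 0}
  zero_mem' := fun f _ => map_zero _
  add_mem' := fun {a b} ha hb f hf => by rw [map_add, ha f hf, hb f hf, add_zero]
  smul_mem' := fun c g hg f hf => by rw [map_smul, hg f hf, smul_zero]

/-- The maximal ideal `M = (x_1, …, x_n)` of `R = K[[x_1,…,x_n]]`,
i.e. the ideal of power series with zero constant term. -/
noncomputable def mxR (K : Type*) [Field K] (n : ℕ) : Ideal (MvPowerSeries (Fin n) K) :=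
  RingHom.ker (MvPowerSeries.constantCoeff (σ := Fin n) (R := K))

/-- The Hilbert function of `A = R/I` where `R = K[[x_1,…,x_n]]`:
`HF_A(i) = dim_K (m^i/m^(i+1)) = dim_K A/m^(i+1) - dim_K A/m^i`, computed via
`A/m^j = R/(I + M^j)` where `M = (x_1,…,x_n)`. -/
noncomputable def hilbQ {K : Type*} [Field K] {n : ℕ}
    (I : Ideal (MvPowerSeries (Fin n) K)) (i : ℕ) : ℕ :=
  Module.finrank K (MvPowerSeries (Fin n) K ⧸ (I ⊔ mxR K n ^ (i + 1))) -
    Module.finrank K (MvPowerSeries (Fin n) K ⧸ (I ⊔ mxR K n ^ i))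

/-- The subspace `P_{< i}` of polynomials of degree `< i`
(`⊥` for `i = 0`, otherwise `P_{≤ i-1}`). -/
noncomputable def pLT (K : Type*) [Field K] (n : ℕ) :
    ℕ → Submodule K (MvPolynomial (Fin n) K)
  | 0 => ⊥
  | (j + 1) => MvPolynomial.restrictTotalDegree (Fin n) K j

/-!
The apolar pairing of polynomials with power series makes the contraction by `f` adjoint to the
multiplication by `f`. Hence `I^⊥` consists of the polynomials that pair to zero with `I`. Since
`m^j` consists of the power series without terms of degree `< j`, the pairing identifies `P_{<j}`
with all functionals vanishing on `m^j`, and so `I^⊥ ∩ P_{<j}` with the dual of `R/(I + m^j)`.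
Comparing `j = i + 1` with `j = i` gives the Hilbert function.
-/

section LinearAlgebra

theorem finrank_map_add_finrank_inf_ker {K V V' : Type*} [DivisionRing K] [AddCommGroup V]
    [Module K V] [AddCommGroup V'] [Module K V'] (f : V →ₗ[K] V') (W : Submodule K V)
    [FiniteDimensional K W] :
    Module.finrank K (W.map f) + Module.finrank K (W ⊓ LinearMap.ker f : Submodule K V) =
      Module.finrank K W := by
  have ker_eq : (LinearMap.ker (f.domRestrict W)).map W.subtype = W ⊓ LinearMap.ker f := by
    rw [LinearMap.ker_domRestrict, Submodule.map_comap_subtype]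
  rw [← LinearMap.finrank_range_add_finrank_ker (f.domRestrict W), LinearMap.range_domRestrict,
    ← ker_eq, Submodule.finrank_map_subtype_eq]

theorem finrank_dualAnnihilator_eq_finrank_quotient {K V : Type*} [Field K] [AddCommGroup V]
    [Module K V] (W : Submodule K V) :
    Module.finrank K W.dualAnnihilator = Module.finrank K (V ⧸ W) := by
  rw [← W.dualQuotEquivDualAnnihilator.finrank_eq, Subspace.dual_finrank_eq]

end LinearAlgebra

section PowersOfTheMaximalIdeal

variable {σ R : Type*} [Finite σ] [CommRing R]

-- Power series are the adic completion of polynomials, and completion does not change the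
-- quotients by powers of the ideal, so the claim reduces to the one about polynomials.
theorem mem_map_idealOfVars_pow_iff (j : ℕ) (f : MvPowerSeries σ R) :
    f ∈ (MvPolynomial.idealOfVars σ R).map
        (algebraMap (MvPolynomial σ R) (MvPowerSeries σ R)) ^ j ↔
      ∀ d : σ →₀ ℕ, d.degree < j → MvPowerSeries.coeff d f = 0 := by
  let J := MvPolynomial.idealOfVars σ R
  let e := (MvPowerSeries.toAdicCompletionAlgEquiv σ R).toLinearEquiv
  have map_smul_top : (J ^ j • ⊤ : Submodule _ (MvPowerSeries σ R)).map e.toLinearMap =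
      J ^ j • ⊤ := by
    rw [Submodule.map_smul'', Submodule.map_top, LinearEquiv.range]
  calc f ∈ J.map (algebraMap _ (MvPowerSeries σ R)) ^ j
    _ ↔ f ∈ (J ^ j • ⊤ : Submodule _ (MvPowerSeries σ R)) := by
      rw [Ideal.smul_top_eq_map, ← Ideal.map_pow, Submodule.restrictScalars_mem]
    _ ↔ e f ∈ (J ^ j • ⊤ : Submodule _ (AdicCompletion J (MvPolynomial σ R))) := by
      rw [← map_smul_top]
      exact (e.injective.mem_set_image).symm
    _ ↔ MvPowerSeries.truncTotal j f ∈ J ^ j := by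
      rw [AdicCompletion.pow_smul_top_eq_ker_eval (MvPolynomial.idealOfVars_fg σ R),
        LinearMap.mem_ker, AdicCompletion.eval_apply]
      change (MvPowerSeries.toAdicCompletion σ R f).val j = 0 ↔ _
      rw [MvPowerSeries.toAdicCompletion_apply_eq_mk_truncTotal]
      simp [Ideal.Quotient.eq_zero_iff_mem, J]
    _ ↔ ∀ d : σ →₀ ℕ, d.degree < j → MvPowerSeries.coeff d f = 0 := by
      rw [MvPolynomial.mem_pow_idealOfVars_iff']
      exact forall₂_congr fun d hd ↦ by rw [MvPowerSeries.coeff_truncTotal f hd]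

theorem map_idealOfVars_eq_ker_constantCoeff :
    (MvPolynomial.idealOfVars σ R).map (algebraMap (MvPolynomial σ R) (MvPowerSeries σ R)) =
      RingHom.ker (MvPowerSeries.constantCoeff (σ := σ) (R := R)) := by
  ext f
  rw [← pow_one (Ideal.map _ _), mem_map_idealOfVars_pow_iff]
  simp [RingHom.mem_ker, Finsupp.degree_eq_zero_iff]

theorem mem_ker_constantCoeff_pow_iff (j : ℕ) (f : MvPowerSeries σ R) :
    f ∈ RingHom.ker (MvPowerSeries.constantCoeff (σ := σ) (R := R)) ^ j ↔
      ∀ d : σ →₀ ℕ, d.degree < j → MvPowerSeries.coeff d f = 0 := by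
  rw [← map_idealOfVars_eq_ker_constantCoeff, mem_map_idealOfVars_pow_iff]

end PowersOfTheMaximalIdeal

section MultiFactorial

open Nat

variable {σ : Type*}

/-- The factorial `β! = ∏ i, (β i)!` of a multi-index, the weight of the apolar pairing. -/
def multiFactorial (β : σ →₀ ℕ) : ℕ :=
  β.prod fun _ k ↦ k !

theorem multiFactorial_ne_zero (β : σ →₀ ℕ) : multiFactorial β ≠ 0 :=
  Finset.prod_ne_zero_iff.mpr fun i _ ↦ (β i).factorial_ne_zero

theorem multiFactorial_mul_prod_descFactorial [Fintype σ] (α γ : σ →₀ ℕ) :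
    multiFactorial γ * ∏ i, ((α + γ) i).descFactorial (α i) = multiFactorial (α + γ) := by
  have eq_prod (β : σ →₀ ℕ) : multiFactorial β = ∏ i, (β i)! :=
    β.prod_fintype _ fun _ ↦ factorial_zero
  rw [eq_prod, eq_prod, ← Finset.prod_mul_distrib]
  refine Finset.prod_congr rfl fun i _ ↦ ?_
  simpa using factorial_mul_descFactorial (le_add_right (α i) (γ i))

end MultiFactorial

section ApolarPairing

variable {σ R : Type*} [CommSemiring R]

variable (σ R) in
/-- The apolar pairing `⟨g, f⟩ = ∑ β, β! g_β f_β` of a polynomial `g` with a power series `f`, that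
is, the constant coefficient of `f(∂)(g)`. It is curried as a map into the dual of the power
series. -/
noncomputable def apolarPairing : MvPolynomial σ R →ₗ[R] Module.Dual R (MvPowerSeries σ R) :=
  (MvPolynomial.basisMonomials σ R).constr R fun β ↦ multiFactorial β • MvPowerSeries.coeff β

theorem apolarPairing_monomial_one (β : σ →₀ ℕ) (f : MvPowerSeries σ R) :
    apolarPairing σ R (MvPolynomial.monomial β 1) f =
      multiFactorial β • MvPowerSeries.coeff β f :=
  LinearMap.congr_fun ((MvPolynomial.basisMonomials σ R).constr_basis R _ β) f

theorem apolarPairing_apply_monomial_one (g : MvPolynomial σ R) (α : σ →₀ ℕ) :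
    apolarPairing σ R g (MvPowerSeries.monomial α 1) =
      multiFactorial α • MvPolynomial.coeff α g := by
  classical
  suffices (apolarPairing σ R).flip (MvPowerSeries.monomial α 1) =
      multiFactorial α • MvPolynomial.lcoeff R α from LinearMap.congr_fun this g
  refine (MvPolynomial.basisMonomials σ R).ext fun β ↦ ?_
  rw [MvPolynomial.coe_basisMonomials, LinearMap.flip_apply, apolarPairing_monomial_one,
    LinearMap.smul_apply, MvPolynomial.lcoeff_apply, MvPolynomial.coeff_monomial,
    MvPowerSeries.coeff_monomial]
  split_ifs with h <;> simp [h]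

variable [IsAddTorsionFree R]

theorem apolarPairing_injective : Function.Injective (apolarPairing σ R) := fun g g' h ↦ by
  ext α
  refine nsmul_right_injective (multiFactorial_ne_zero α) ?_
  simp only [← apolarPairing_apply_monomial_one, h]

theorem mem_dualCoannihilator_map_restrictSupport_iff (s : Set (σ →₀ ℕ)) (f : MvPowerSeries σ R) :
    f ∈ ((MvPolynomial.restrictSupport R s).map (apolarPairing σ R)).dualCoannihilator ↔
      ∀ β ∈ s, MvPowerSeries.coeff β f = 0 := by
  rw [MvPolynomial.restrictSupport_eq_span, Submodule.map_span, ← SetLike.mem_coe,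
    Submodule.coe_dualCoannihilator_span]
  simp only [Set.mem_ofPred_eq, Set.forall_mem_image, apolarPairing_monomial_one,
    nsmul_eq_zero_iff_right (multiFactorial_ne_zero _)]

end ApolarPairing

section InverseSystem

variable {K : Type*} [Field K] {n : ℕ}

theorem contract_monomial_one (f : MvPowerSeries (Fin n) K) (β : Fin n →₀ ℕ) :
    contract f (MvPolynomial.monomial β 1) = ∑ α ∈ Finset.Iic β,
      (MvPowerSeries.coeff α f * ∏ i, ((β i).descFactorial (α i) : K)) •
        MvPolynomial.monomial (β - α) (1 : K) :=
  (MvPolynomial.basisMonomials (Fin n) K).constr_basis K _ β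

theorem apolarPairing_contract (f h : MvPowerSeries (Fin n) K) (g : MvPolynomial (Fin n) K) :
    apolarPairing (Fin n) K (contract f g) h = apolarPairing (Fin n) K g (f * h) := by
  suffices (apolarPairing (Fin n) K).flip h ∘ₗ contract f =
      (apolarPairing (Fin n) K).flip (f * h) from LinearMap.congr_fun this g
  refine (MvPolynomial.basisMonomials (Fin n) K).ext fun β ↦ ?_
  rw [MvPolynomial.coe_basisMonomials, LinearMap.comp_apply, LinearMap.flip_apply,
    LinearMap.flip_apply, contract_monomial_one, apolarPairing_monomial_one, map_sum,
    LinearMap.sum_apply, MvPowerSeries.coeff_mul, Finset.smul_sum]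
  refine Finset.sum_nbij' (fun α ↦ (α, β - α)) Prod.fst ?_ ?_ ?_ ?_ ?_
  · intro α hα
    exact Finset.HasAntidiagonal.mem_antidiagonal.mpr
      (add_tsub_cancel_of_le (Finset.mem_Iic.mp hα))
  · intro p hp
    exact Finset.mem_Iic.mpr (Finset.HasAntidiagonal.mem_antidiagonal.mp hp ▸ le_self_add)
  · exact fun _ _ ↦ rfl
  · rintro ⟨α, γ⟩ hp
    rw [← Finset.HasAntidiagonal.mem_antidiagonal.mp hp, add_tsub_cancel_left]
  · intro α hα
    obtain ⟨γ, rfl⟩ := exists_add_of_le (Finset.mem_Iic.mp hα)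
    simp only [map_smul, LinearMap.smul_apply, apolarPairing_monomial_one, add_tsub_cancel_left,
      ← multiFactorial_mul_prod_descFactorial α γ, smul_eq_mul, nsmul_eq_mul]
    push_cast
    ring

theorem pLT_eq_restrictSupport (j : ℕ) :
    pLT K n j = MvPolynomial.restrictSupport K {β | β.degree < j} := by
  cases j with
  | zero => simp [pLT, MvPolynomial.restrictSupport_eq_span]
  | succ j => simp only [Nat.lt_succ_iff]; rfl

theorem pLT_mono : Monotone (pLT K n) := fun j k hjk ↦ by
  simp only [pLT_eq_restrictSupport]
  exact MvPolynomial.restrictSupport_mono K fun β hβ ↦ lt_of_lt_of_le hβ hjk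

instance finiteDimensional_pLT (j : ℕ) : FiniteDimensional K (pLT K n j) :=
  Submodule.finiteDimensional_of_le (S₂ := MvPolynomial.restrictTotalDegree (Fin n) K j)
    (pLT_mono j.le_succ)

variable [CharZero K]

theorem perpSpace_eq_comap_dualAnnihilator (I : Ideal (MvPowerSeries (Fin n) K)) :
    perpSpace I = (I.restrictScalars K).dualAnnihilator.comap (apolarPairing (Fin n) K) := by
  ext g
  rw [Submodule.mem_comap, Submodule.mem_dualAnnihilator]
  refine ⟨fun hg f hf ↦ ?_, fun hg f hf ↦ apolarPairing_injective ?_⟩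
  · rw [← mul_one f, ← apolarPairing_contract, hg f hf, map_zero, LinearMap.zero_apply]
  · ext h
    rw [apolarPairing_contract, hg _ (I.mul_mem_right h hf), map_zero, LinearMap.zero_apply]

theorem map_apolarPairing_pLT (j : ℕ) :
    (pLT K n j).map (apolarPairing (Fin n) K) =
      ((mxR K n ^ j).restrictScalars K).dualAnnihilator := by
  have dualCoannihilator_eq : ((pLT K n j).map (apolarPairing (Fin n) K)).dualCoannihilator =
      (mxR K n ^ j).restrictScalars K := by
    ext f
    rw [pLT_eq_restrictSupport, mem_dualCoannihilator_map_restrictSupport_iff,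
      Submodule.restrictScalars_mem, mxR, mem_ker_constantCoeff_pow_iff]
    rfl
  rw [← dualCoannihilator_eq, Subspace.dualCoannihilator_dualAnnihilator_eq]

theorem map_apolarPairing_perpSpace_inf_pLT (I : Ideal (MvPowerSeries (Fin n) K)) (j : ℕ) :
    (perpSpace I ⊓ pLT K n j).map (apolarPairing (Fin n) K) =
      ((I ⊔ mxR K n ^ j).restrictScalars K).dualAnnihilator := by
  rw [inf_comm, perpSpace_eq_comap_dualAnnihilator, ← Submodule.map_inf_eq_map_inf_comap,
    map_apolarPairing_pLT, inf_comm, ← Submodule.dualAnnihilator_sup_eq,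
    Submodule.restrictScalars_sup]

theorem finrank_quotient_sup_mxR_pow (I : Ideal (MvPowerSeries (Fin n) K)) (j : ℕ) :
    Module.finrank K (MvPowerSeries (Fin n) K ⧸ (I ⊔ mxR K n ^ j)) =
      Module.finrank K (perpSpace I ⊓ pLT K n j : Submodule K _) := by
  rw [← (Submodule.Quotient.restrictScalarsEquiv K (I ⊔ mxR K n ^ j)).finrank_eq,
    ← finrank_dualAnnihilator_eq_finrank_quotient, ← map_apolarPairing_perpSpace_inf_pLT]
  exact (Submodule.equivMapOfInjective _ apolarPairing_injective _).finrank_eq.symm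

end InverseSystem

theorem hilbert_function_eq_perp_dim_general {K : Type*} [Field K] [CharZero K] {n : ℕ}
    (I : Ideal (MvPowerSeries (Fin n) K)) (i : ℕ) :
    hilbQ I i =
      Module.finrank K (Submodule.map (pLT K n i).mkQ
        (perpSpace I ⊓ MvPolynomial.restrictTotalDegree (Fin n) K i)) := by
  change _ = Module.finrank K ((perpSpace I ⊓ pLT K n (i + 1)).map (pLT K n i).mkQ)
  rw [hilbQ, finrank_quotient_sup_mxR_pow, finrank_quotient_sup_mxR_pow,
    ← finrank_map_add_finrank_inf_ker (pLT K n i).mkQ, Submodule.ker_mkQ, inf_assoc,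
    inf_eq_right.mpr (pLT_mono i.le_succ), Nat.add_sub_cancel]

/-- The Hilbert function of `A = R/I` via the inverse system: for every `i`,
`HF_{R/I}(i) = dim_K ((I^⊥ ∩ P_{≤ i} + P_{< i}) / P_{< i})`, the right-hand side
being realized as the image of `I^⊥ ∩ P_{≤ i}` in `P/P_{< i}`. -/
theorem hilbert_function_eq_perp_dim
    {K : Type*} [Field K] [IsAlgClosed K] [CharZero K] {n : ℕ}
    (I : Ideal (MvPowerSeries (Fin n) K))
    (hlen : IsFiniteLength (MvPowerSeries (Fin n) K) (MvPowerSeries (Fin n) K ⧸ I))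
    (i : ℕ) :
    hilbQ I i =
      Module.finrank K (Submodule.map (pLT K n i).mkQ
        (perpSpace I ⊓ MvPolynomial.restrictTotalDegree (Fin n) K i)) :=
  hilbert_function_eq_perp_dim_general I i
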